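/- There exists a universal constant C such that for every a ≥ π with μ = √(1 − π²/a²) ≥ 1/2, all x, r ∈ (0,a) and every t > 0, one has ∫_r^a 𝔭_t(x,y) dy = (2π(1+μr)·e^{μ(a−r)}/a³)·w_Z(x)·(1 + err) for some real err with |err| ≤ E_{t/a²} + C·(1 + E_{t/a²})·((1+r)/a)². -/

import Mathlib

open Real MeasureTheory Set Filter

/-- Transition density of Brownian motion killed upon exiting `(0,a)`. -/
noncomputable def pker (a t x y : ℝ) : ℝ :=
  (2/a) * ∑' n : ℕ, Real.exp (-(π^2) * ((n : ℝ) + 1)^2 * t / (2 * a^2)) *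
    Real.sin (π * ((n : ℝ) + 1) * x / a) * Real.sin (π * ((n : ℝ) + 1) * y / a)

/-- `μ = √(1 − π²/a²)`. -/
noncomputable def muFn (a : ℝ) : ℝ := Real.sqrt (1 - π^2 / a^2)

/-- `w_Z(x) = a·e^{μ(x−a)}·sin(πx/a)`. -/
noncomputable def wZ (a x : ℝ) : ℝ := a * Real.exp (muFn a * (x - a)) * Real.sin (π * x / a)

/-- Density of the branching Brownian motion with drift `−μ` before absorption. -/
noncomputable def pdens (a t x y : ℝ) : ℝ :=
  Real.exp (muFn a * (x - y) + π^2 * t / (2 * a^2)) * pker a t x y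

/-- `E_t = π²·∑_{n≥2} n²·exp(−π²(n²−1)t/2)`. -/
noncomputable def Efun (t : ℝ) : ℝ :=
  π^2 * ∑' n : ℕ, ((n : ℝ) + 2)^2 * Real.exp (-(π^2) * (((n : ℝ) + 2)^2 - 1) * t / 2)

lemma aux_abs_sin_nat (n : ℕ) (x : ℝ) : |Real.sin ((n : ℝ) * x)| ≤ n * |Real.sin x| := by
  induction n with
  | zero => simp
  | succ k ih =>
    have h : ((k + 1 : ℕ) : ℝ) * x = k * x + x := by push_cast; ring
    rw [h, Real.sin_add]
    have h1 := abs_add_le (Real.sin (k * x) * Real.cos x) (Real.cos (k * x) * Real.sin x)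
    rw [abs_mul, abs_mul] at h1
    have h2 := Real.abs_cos_le_one x
    have h3 := Real.abs_cos_le_one (k * x)
    have h4 := mul_le_mul_of_nonneg_left h2 (abs_nonneg (Real.sin (k * x)))
    have h5 := mul_le_mul_of_nonneg_right h3 (abs_nonneg (Real.sin x))
    push_cast
    linarith

lemma aux_summable_exp (c : ℝ) (hc : 0 < c) :
    Summable fun n : ℕ => ((n : ℝ) + 1)^2 * Real.exp (-c * ((n : ℝ) + 1)^2) := by
  have h := (summable_nat_add_iff 1).2 (Real.summable_pow_mul_exp_neg_nat_mul 2 hc)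
  refine Summable.of_nonneg_of_le (fun n => by positivity) (fun n => ?_) h
  push_cast
  refine mul_le_mul_of_nonneg_left (Real.exp_le_exp.2 ?_) (by positivity)
  have : (0:ℝ) ≤ n := n.cast_nonneg
  have : (n:ℝ) + 1 ≤ ((n:ℝ)+1)^2 := by nlinarith
  exact mul_le_mul_of_nonpos_left this (by linarith)

lemma aux_summable_E (s : ℝ) (hs : 0 < s) :
    Summable fun n : ℕ =>
      ((n : ℝ) + 2)^2 * Real.exp (-(π^2) * (((n : ℝ) + 2)^2 - 1) * s / 2) := by
  have hc : 0 < π^2 * s / 2 := by positivity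
  have h := ((summable_nat_add_iff 1).2 (aux_summable_exp _ hc)).mul_right
    (Real.exp (π^2 * s / 2))
  refine h.congr (fun n => ?_)
  rw [mul_assoc, ← Real.exp_add]
  push_cast
  congr 2 <;> ring

lemma aux_Efun_nonneg (s : ℝ) : 0 ≤ Efun s := by
  unfold Efun
  exact mul_nonneg (by positivity) (tsum_nonneg (fun n => by positivity))

lemma aux_term_bound (a t x y : ℝ) (n : ℕ) :
    |Real.exp (-(π^2) * ((n : ℝ) + 1)^2 * t / (2 * a^2)) *
    Real.sin (π * ((n : ℝ) + 1) * x / a) * Real.sin (π * ((n : ℝ) + 1) * y / a)| ≤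
    Real.exp (-(π^2) * ((n : ℝ) + 1)^2 * t / (2 * a^2)) := by
  rw [abs_mul, abs_mul, abs_of_pos (Real.exp_pos _)]
  have h1 := Real.abs_sin_le_one (π * ((n : ℝ) + 1) * x / a)
  have h2 := Real.abs_sin_le_one (π * ((n : ℝ) + 1) * y / a)
  have h3 := mul_le_one₀ h1 (abs_nonneg _) h2
  rw [mul_assoc]
  exact mul_le_of_le_one_right (Real.exp_pos _).le h3

lemma aux_summable_c (a t : ℝ) (ha : 0 < a) (ht : 0 < t) :
    Summable fun n : ℕ => Real.exp (-(π^2) * ((n : ℝ) + 1)^2 * t / (2 * a^2)) := by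
  have hc : 0 < π^2 * t / (2 * a^2) := by positivity
  refine Summable.of_nonneg_of_le (fun n => by positivity) (fun n => ?_) (aux_summable_exp _ hc)
  have h : -(π^2) * ((n : ℝ) + 1)^2 * t / (2 * a^2)
    = -(π^2 * t / (2 * a^2)) * ((n : ℝ) + 1)^2 := by ring
  rw [h]
  have : (0:ℝ) ≤ n := n.cast_nonneg
  have : (1:ℝ) ≤ ((n:ℝ)+1)^2 := by nlinarith
  exact le_mul_of_one_le_left (Real.exp_pos _).le this

lemma aux_cont (a t x : ℝ) (ha : 0 < a) (ht : 0 < t) : Continuous (pdens a t x) := by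
  unfold pdens pker
  have : Continuous fun y : ℝ => ∑' n : ℕ, Real.exp (-(π^2) * ((n : ℝ) + 1)^2 * t / (2 * a^2)) *
    Real.sin (π * ((n : ℝ) + 1) * x / a) * Real.sin (π * ((n : ℝ) + 1) * y / a) := by
    refine continuous_tsum (fun n => by fun_prop) (aux_summable_c a t ha ht) (fun n y => ?_)
    exact aux_term_bound a t x y n
  fun_prop

lemma aux_pointwise (a t x y : ℝ) (ha : 0 < a) (ht : 0 < t) (hx : x ∈ Set.Icc 0 a)
    (hy : y ∈ Set.Icc 0 a) :
    |pdens a t x y - 2 / a * Real.exp (muFn a * (x - y)) * Real.sin (π * x / a) *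
      Real.sin (π * y / a)| ≤ Efun (t / a^2) * (2 / a * Real.exp (muFn a * (x - y)) *
        Real.sin (π * x / a) * Real.sin (π * y / a)) := by
  have hsin : ∀ z ∈ Set.Icc (0:ℝ) a, 0 ≤ Real.sin (π * z / a) := by
    intro z hz
    apply Real.sin_nonneg_of_nonneg_of_le_pi
    · have := hz.1; positivity
    · rw [div_le_iff₀ ha]; exact mul_le_mul_of_nonneg_left hz.2 pi_pos.le
  have sx := hsin x hx
  have sy := hsin y hy
  set F : ℕ → ℝ := fun n => Real.exp (-(π^2) * ((n : ℝ) + 1)^2 * t / (2 * a^2)) *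
    Real.sin (π * ((n : ℝ) + 1) * x / a) * Real.sin (π * ((n : ℝ) + 1) * y / a) with hF
  have hFs : Summable F := Summable.of_norm_bounded (aux_summable_c a t ha ht)
    (fun n => aux_term_bound a t x y n)
  set D := Real.exp (-(π^2 * t / (2 * a^2))) with hD
  set G : ℕ → ℝ := fun n => ((n : ℝ) + 2)^2 *
    Real.exp (-(π^2) * (((n : ℝ) + 2)^2 - 1) * (t / a^2) / 2) with hG
  have hGs : Summable G := aux_summable_E _ (by positivity)
  have hF0 : F 0 = D * (Real.sin (π * x / a) * Real.sin (π * y / a)) := by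
    simp only [hF, hD]; norm_num
    rw [mul_assoc]; congr 2; ring
  have hbd : ∀ n, ‖F (n+1)‖ ≤ G n * (D * (Real.sin (π * x / a) * Real.sin (π * y / a))) := by
    intro n
    have e1 : π * (((n+1 : ℕ) : ℝ) + 1) * x / a = ((n + 2 : ℕ) : ℝ) * (π * x / a) := by
      push_cast; ring
    have e2 : π * (((n+1 : ℕ) : ℝ) + 1) * y / a = ((n + 2 : ℕ) : ℝ) * (π * y / a) := by
      push_cast; ring
    have e3 : Real.exp (-(π^2) * (((n+1 : ℕ) : ℝ) + 1)^2 * t / (2 * a^2)) =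
        Real.exp (-(π^2) * (((n : ℝ) + 2)^2 - 1) * (t / a^2) / 2) * D := by
      rw [hD, ← Real.exp_add]; congr 1; push_cast; field_simp; ring
    have b1 := aux_abs_sin_nat (n+2) (π * x / a)
    have b2 := aux_abs_sin_nat (n+2) (π * y / a)
    rw [abs_of_nonneg sx] at b1
    rw [abs_of_nonneg sy] at b2
    simp only [hF, hG]
    rw [e1, e2, e3, Real.norm_eq_abs, abs_mul, abs_mul, abs_of_pos (by positivity), mul_assoc]
    calc _ ≤ Real.exp (-(π^2) * (((n : ℝ) + 2)^2 - 1) * (t / a^2) / 2) * D *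
          ((((n+2 : ℕ) : ℝ) * Real.sin (π * x / a)) * (((n+2 : ℕ) : ℝ) * Real.sin (π * y / a))) := by
          gcongr
      _ = _ := by push_cast; ring
  have htail : |∑' n, F (n+1)| ≤ (∑' n, G n) * (D * (Real.sin (π * x / a) * Real.sin (π * y / a))) := by
    rw [← tsum_mul_right, ← Real.norm_eq_abs]
    exact tsum_of_norm_bounded (hGs.mul_right _).hasSum hbd
  have hE : ∑' n, G n ≤ Efun (t / a^2) := by
    have h0 : 0 ≤ ∑' n, G n := tsum_nonneg (fun n => by positivity)
    have : Efun (t / a^2) = π^2 * ∑' n, G n := rfl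
    rw [this]
    have : 1 ≤ π^2 := by nlinarith [pi_gt_three]
    nlinarith
  have hpk : pker a t x y = 2 / a * ∑' n, F n := rfl
  have hexp : Real.exp (muFn a * (x - y) + π^2 * t / (2 * a^2)) * D =
      Real.exp (muFn a * (x - y)) := by
    rw [hD, ← Real.exp_add]; congr 1; ring
  set P := Real.exp (muFn a * (x - y) + π^2 * t / (2 * a^2)) with hP
  have hdiff : pdens a t x y - 2 / a * Real.exp (muFn a * (x - y)) * Real.sin (π * x / a) *
      Real.sin (π * y / a) = P * (2 / a) * ∑' n, F (n+1) := by
    unfold pdens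
    rw [hpk, hFs.tsum_eq_zero_add, hF0, ← hexp]; ring
  rw [hdiff, abs_mul, abs_of_pos (by positivity)]
  calc _ ≤ P * (2/a) * (Efun (t / a^2) * (D * (Real.sin (π * x / a) * Real.sin (π * y / a)))) := by
        refine mul_le_mul_of_nonneg_left (htail.trans ?_) (by positivity)
        exact mul_le_mul_of_nonneg_right hE (by positivity)
    _ = _ := by rw [← hexp]; ring

lemma aux_int (m k a r : ℝ) (h : m^2 + k^2 = 1) (hka : k * a = π) :
    ∫ y in r..a, Real.exp (-(m * y)) * Real.sin (k * y) =
      Real.exp (-(m * r)) * (m * Real.sin (k * r) + k * Real.cos (k * r)) +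
        k * Real.exp (-(m * a)) := by
  have hd : ∀ y ∈ Set.uIcc r a, HasDerivAt
      (fun y => -(Real.exp (-(m * y)) * (m * Real.sin (k * y) + k * Real.cos (k * y))))
      (Real.exp (-(m * y)) * Real.sin (k * y)) y := by
    intro y _
    have hm : HasDerivAt (fun y : ℝ => m * y) m y := by simpa using (hasDerivAt_id y).const_mul m
    have hk : HasDerivAt (fun y : ℝ => k * y) k y := by simpa using (hasDerivAt_id y).const_mul k
    have := ((hm.neg.exp).mul ((hk.sin.const_mul m).add (hk.cos.const_mul k))).neg
    refine this.congr_deriv ?_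
    simp only [Pi.neg_apply, Pi.add_apply]
    linear_combination Real.exp (-(m * y)) * Real.sin (k * y) * h
  rw [intervalIntegral.integral_eq_sub_of_hasDerivAt hd
    (by apply Continuous.intervalIntegrable; fun_prop)]
  rw [hka, Real.sin_pi, Real.cos_pi]; ring

/-- The ratio estimate. -/
lemma aux_ratio (m k a r : ℝ) (hm : 1/2 ≤ m) (ha : 0 < a) (hk : 0 < k) (hka : k * a = π)
    (hr : 0 < r) (hra : r < a) :
    |(m * Real.sin (k * r) / k + Real.cos (k * r) + Real.exp (-(m * (a - r)))) / (1 + m * r) - 1|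
      ≤ 26 * ((1 + r) / a)^2 := by
  have hkr : 0 < k * r := by positivity
  have hkr' : k * r < π := by rw [← hka]; exact mul_lt_mul_of_pos_left hra hk
  have hs1 : Real.sin (k * r) ≤ k * r := Real.sin_le hkr.le
  have hs2 : k * r - (k * r)^3 ≤ Real.sin (k * r) := by
    rcases le_total (k * r) 1 with h | h
    · have := Real.sin_gt_sub_cube hkr
      have h3 : 0 < (k*r)^3 := by positivity
      linarith
    · have h0 := Real.sin_nonneg_of_nonneg_of_le_pi hkr.le hkr'.le
      nlinarith [mul_le_mul_of_nonneg_left h hkr.le, mul_nonneg hkr.le (sub_nonneg.2 h)]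
  have hc1 := Real.cos_le_one (k * r)
  have hc2 := Real.one_sub_sq_div_two_le_cos (x := k * r)
  set q := ((1 + r) / a)^2 with hq
  have hkrq : (k * r)^2 ≤ 10 * q := by
    have : (k * r)^2 = π^2 * (r / a)^2 := by rw [← hka]; field_simp
    rw [this]
    have h1 : π^2 ≤ 10 := by nlinarith [pi_lt_d2, pi_pos]
    have h2 : (r / a)^2 ≤ q := by rw [hq]; gcongr; linarith
    gcongr
  have hexp : Real.exp (-(m * (a - r))) ≤ 16 * q := by
    set z := a - r with hz
    have hz0 : 0 < z := by rw [hz]; linarith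
    have h1 : Real.exp (-(m * z)) ≤ Real.exp (-(z / 4)) ^ 2 := by
      rw [← Real.exp_nat_mul]
      apply Real.exp_le_exp.2
      push_cast
      nlinarith
    have h2 : Real.exp (-(z / 4)) ≤ 4 * ((1 + r) / a) := by
      rw [Real.exp_neg]
      have h3 : z / 4 + 1 ≤ Real.exp (z / 4) := Real.add_one_le_exp _
      have h4 : a ≤ (1 + r) * (1 + z) := by
        have : a = z + r := by rw [hz]; ring
        nlinarith
      rw [inv_le_iff_one_le_mul₀ (Real.exp_pos _)]
      have h5 : 1 ≤ (4 * ((1 + r) / a)) * (z/4 + 1) := by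
        have : (4 * ((1 + r) / a)) * (z/4 + 1) = ((1 + r) * (z + 4)) / a := by field_simp
        rw [this, one_le_div ha]
        nlinarith
      refine h5.trans ?_
      gcongr
    calc _ ≤ _ := h1
      _ ≤ (4 * ((1 + r) / a))^2 := by gcongr
      _ = 16 * q := by rw [hq]; ring
  have hE0 := Real.exp_pos (-(m * (a - r)))
  have hd : 1 ≤ 1 + m * r := by nlinarith
  have hs1' : m * Real.sin (k * r) / k ≤ m * r := by
    rw [div_le_iff₀ hk]; nlinarith
  have hs2' : m * r * (1 - (k * r)^2) ≤ m * Real.sin (k * r) / k := by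
    rw [le_div_iff₀ hk]
    nlinarith
  have hq0 : 0 ≤ q := by positivity
  rw [div_sub_one (by linarith), abs_div, abs_of_pos (a := 1 + m * r) (by linarith),
    div_le_iff₀ (by linarith), abs_le]
  have hmr : 0 < m * r := by nlinarith
  constructor
  · nlinarith [mul_nonneg hmr.le (sub_nonneg.2 hkrq), mul_nonneg hmr.le hq0]
  · nlinarith [mul_nonneg hmr.le hq0]

/-- Expected number of particles in `[r,a]` at time `t`:
`∫_r^a 𝔭_t(x,y) dy = (2π(1+μr)·e^{μ(a−r)}/a³)·w_Z(x)·(1 + err)` with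
`|err| ≤ E_{t/a²} + C·(1+E_{t/a²})·((1+r)/a)²`. -/
theorem stmt15 :
    ∃ C : ℝ, 0 < C ∧ ∀ a : ℝ, π ≤ a → (1/2 : ℝ) ≤ muFn a →
      ∀ x ∈ Set.Ioo (0:ℝ) a, ∀ r ∈ Set.Ioo (0:ℝ) a, ∀ t : ℝ, 0 < t →
      ∃ err : ℝ,
        (∫ y in r..a, pdens a t x y) =
          (2 * π * (1 + muFn a * r) * Real.exp (muFn a * (a - r)) / a^3) *
            wZ a x * (1 + err) ∧
        |err| ≤ Efun (t / a^2) + C * (1 + Efun (t / a^2)) * ((1 + r) / a)^2 := by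
  refine ⟨26, by norm_num, ?_⟩
  intro a hpa hmu x hx r hr t ht
  have ha : 0 < a := pi_pos.trans_le hpa
  have hmk : muFn a ^ 2 + (π / a)^2 = 1 := by
    have h : 0 ≤ 1 - π^2 / a^2 := by
      rw [sub_nonneg, div_le_one (by positivity)]
      exact pow_le_pow_left₀ pi_pos.le hpa 2
    unfold muFn
    rw [Real.sq_sqrt h]; ring
  have hk : 0 < π / a := by positivity
  have hka : π / a * a = π := by field_simp
  set m := muFn a with hm
  set k := π / a with hkdef
  have hJ := aux_int m k a r hmk hka
  have hrat := aux_ratio m k a r hmu ha hk hka hr.1 hr.2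
  set N := m * Real.sin (k * r) / k + Real.cos (k * r) + Real.exp (-(m * (a - r))) with hN
  set B := 2 / a * Real.exp (m * x) * Real.sin (π * x / a) with hB
  set M : ℝ → ℝ := fun y => 2 / a * Real.exp (m * (x - y)) * Real.sin (π * x / a) *
      Real.sin (π * y / a) with hM
  have hsx : 0 < Real.sin (π * x / a) := by
    apply Real.sin_pos_of_pos_of_lt_pi
    · have := hx.1; positivity
    · rw [div_lt_iff₀ ha]; exact mul_lt_mul_of_pos_left hx.2 pi_pos
  have hBpos : 0 < B := by positivity
  have hMc : Continuous M := by rw [hM]; fun_prop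
  have hMint : ∫ y in r..a, M y = B * (k * Real.exp (-(m * r)) * N) := by
    have h1 : ∀ y, M y = B * (Real.exp (-(m * y)) * Real.sin (k * y)) := by
      intro y
      have e1 : Real.exp (m * (x - y)) = Real.exp (m * x) * Real.exp (-(m * y)) := by
        rw [← Real.exp_add]; congr 1; ring
      have e2 : π * y / a = k * y := by rw [hkdef]; ring
      simp only [hM, hB]
      rw [e1, e2]; ring
    simp_rw [h1]
    rw [intervalIntegral.integral_const_mul, hJ, hN]
    have e3 : Real.exp (-(m * a)) = Real.exp (-(m * r)) * Real.exp (-(m * (a - r))) := by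
      rw [← Real.exp_add]; congr 1; ring
    rw [e3]
    field_simp
  have hpc := aux_cont a t x ha ht
  have hdiff : |(∫ y in r..a, pdens a t x y) - ∫ y in r..a, M y| ≤
      Efun (t / a^2) * ∫ y in r..a, M y := by
    rw [← intervalIntegral.integral_sub (hpc.intervalIntegrable _ _) (hMc.intervalIntegrable _ _),
      ← intervalIntegral.integral_const_mul, ← Real.norm_eq_abs]
    apply intervalIntegral.norm_integral_le_of_norm_le hr.2.le
    · refine Filter.Eventually.of_forall (fun y hy => ?_)
      exact aux_pointwise a t x y ha ht ⟨hx.1.le, hx.2.le⟩ ⟨(hr.1.trans hy.1).le, hy.2⟩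
    · exact (hMc.const_mul _).intervalIntegrable _ _
  have hmr : 0 < 1 + m * r := by
    have := mul_pos (lt_of_lt_of_le (by norm_num : (0:ℝ) < 1/2) hmu) hr.1
    linarith
  set T := B * (k * Real.exp (-(m * r)) * (1 + m * r)) with hT
  have hTpos : 0 < T := by positivity
  have hTeq : (2 * π * (1 + m * r) * Real.exp (m * (a - r)) / a^3) * wZ a x = T := by
    have e4 : Real.exp (m * (a - r)) * Real.exp (m * (x - a)) =
      Real.exp (m * x) * Real.exp (-(m * r)) := by
      rw [← Real.exp_add, ← Real.exp_add]; congr 1; ring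
    unfold wZ
    rw [← hm]
    calc _ = (2 * π * (1 + m * r) / a^3) * a * Real.sin (π * x / a) *
          (Real.exp (m * (a - r)) * Real.exp (m * (x - a))) := by ring
      _ = T := by rw [e4, hT, hB, hkdef]; field_simp
  have hMT : ∫ y in r..a, M y = T * (N / (1 + m * r)) := by
    rw [hMint, hT]; field_simp
  set I := ∫ y in r..a, pdens a t x y with hI
  rw [hMT] at hdiff
  set ρ := N / (1 + m * r) with hρ
  have hE := aux_Efun_nonneg (t / a^2)
  set E := Efun (t / a^2) with hEdef
  refine ⟨I / T - 1, ?_, ?_⟩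
  · rw [hTeq]; field_simp; ring
  · have h1 : |I / T - ρ| ≤ E * ρ := by
      have : I / T - ρ = (I - T * ρ) / T := by field_simp
      rw [this, abs_div, abs_of_pos hTpos, div_le_iff₀ hTpos]
      linarith
    have h2 : |I / T - 1| ≤ |I / T - ρ| + |ρ - 1| := abs_sub_le _ _ _
    have h3 : ρ ≤ 1 + 26 * ((1 + r) / a)^2 := by linarith [(abs_le.1 hrat).2]
    have h4 := mul_le_mul_of_nonneg_left h3 hE
    linarith
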